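/- arXiv:1302.2224 — 2 statements merged into one kernel-verified Lean document; each statement's English description precedes it below -/
import Mathlib

section
/- If u, v ∈ L²(0,1), then the product (Tu)(Tv) is integrable on (0,1) × (−1/2, 1/2) and ∫₀¹ u(x) v(x) dx = ∫∫_{(0,1)×(−1/2,1/2)} (Tu)(x,y) (Tv)(x,y) dx dy. (Inner Product Rule for the two-scale transform.) -/
open Set MeasureTheory

/-- Two-scale transform: `(Tu)(x,y) = u(ε(⌊x/ε⌋ + 1/2) + εy)` with `ε = 1/N`. -/
noncomputable def twoScale (N : ℕ) (u : ℝ → ℝ) (x y : ℝ) : ℝ :=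
  u ((1 / (N : ℝ)) * ((⌊x / (1 / (N : ℝ))⌋ : ℝ) + 1 / 2) + (1 / (N : ℝ)) * y)

lemma ts_cell (e : ℝ) (he : 0 < e) (k : ℝ) (s : Set ℝ) :
    ENNReal.ofReal e * volume ({y | e * (k + 1 / 2) + e * y ∈ s} ∩ Ico (-(1 / 2) : ℝ) (1 / 2))
      = volume (s ∩ Ico (k * e) ((k + 1) * e)) := by
  have h : {y | e * (k + 1 / 2) + e * y ∈ s} ∩ Ico (-(1 / 2) : ℝ) (1 / 2)
      = (fun y => e * y) ⁻¹' ((fun z => e * (k + 1 / 2) + z) ⁻¹'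
          (s ∩ Ico (k * e) ((k + 1) * e))) := by
    ext y
    simp only [mem_inter_iff, mem_setOf_eq, mem_Ico, mem_preimage]
    refine and_congr Iff.rfl (and_congr ?_ ?_)
    · constructor
      · intro h; nlinarith
      · intro h; by_contra! h'; nlinarith
    · constructor
      · intro h; nlinarith
      · intro h; by_contra! h'; nlinarith
  rw [h, Real.volume_preimage_mul_left he.ne', measure_preimage_add, abs_of_pos (inv_pos.2 he),
    ← mul_assoc, ← ENNReal.ofReal_mul he.le, mul_inv_cancel₀ he.ne']
  simp

lemma ts_sum (e : ℝ) (he : 0 < e) (s : Set ℝ) (hs : MeasurableSet s) (n : ℕ) :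
    ∫⁻ x in Ico (0 : ℝ) (n * e),
      volume ({y | e * ((⌊x / e⌋ : ℝ) + 1 / 2) + e * y ∈ s} ∩ Ico (-(1 / 2) : ℝ) (1 / 2))
      = volume (s ∩ Ico (0 : ℝ) (n * e)) := by
  induction n with
  | zero => simp
  | succ n ih =>
    have h1 : (0 : ℝ) ≤ n * e := by positivity
    have h2 : (n : ℝ) * e ≤ (n + 1) * e := by nlinarith
    have hU : Ico (0 : ℝ) ((n + 1) * e) = Ico 0 (n * e) ∪ Ico (n * e) ((n + 1) * e) :=
      (Ico_union_Ico_eq_Ico h1 h2).symm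
    have hd : Disjoint (Ico (0 : ℝ) (n * e)) (Ico (n * e) ((n + 1) * e)) :=
      Ico_disjoint_Ico_same
    push_cast
    rw [hU, lintegral_union measurableSet_Ico hd, ih, inter_union_distrib_left,
      measure_union (hd.mono inter_subset_right inter_subset_right) (hs.inter measurableSet_Ico)]
    congr 1
    rw [← ts_cell e he n s]
    rw [setLIntegral_congr_fun (g := fun _ => volume ({y | e * ((n : ℝ) + 1 / 2) + e * y ∈ s} ∩
      Ico (-(1 / 2) : ℝ) (1 / 2))) measurableSet_Ico, setLIntegral_const, Real.volume_Ico, mul_comm]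
    · congr 2; ring
    · intro x hx
      have : ⌊x / e⌋ = (n : ℤ) := by
        rw [Int.floor_eq_iff]
        push_cast
        exact ⟨(le_div_iff₀ he).2 hx.1, (div_lt_iff₀ he).2 hx.2⟩
      simp only [this, Int.cast_natCast]

lemma ts_mp (N : ℕ) (hN : 0 < N) :
    MeasurePreserving (fun p : ℝ × ℝ =>
      (1 / (N : ℝ)) * ((⌊p.1 / (1 / (N : ℝ))⌋ : ℝ) + 1 / 2) + (1 / (N : ℝ)) * p.2)
      (volume.restrict (Ioo (0 : ℝ) 1 ×ˢ Ioo (-(1 / 2) : ℝ) (1 / 2)))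
      (volume.restrict (Ioo (0 : ℝ) 1)) := by
  have hm : Measurable (fun p : ℝ × ℝ =>
      (1 / (N : ℝ)) * ((⌊p.1 / (1 / (N : ℝ))⌋ : ℝ) + 1 / 2) + (1 / (N : ℝ)) * p.2) := by
    have h0 : Measurable (fun z : ℤ => (z : ℝ)) := measurable_from_top
    have : Measurable (fun p : ℝ × ℝ => (⌊p.1 / (1 / (N : ℝ))⌋ : ℝ)) :=
      h0.comp (Int.measurable_floor.comp (measurable_fst.div_const _))
    fun_prop
  refine ⟨hm, ?_⟩
  ext s hs
  have hNpos : (0 : ℝ) < N := by exact_mod_cast hN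
  rw [Measure.map_apply hm hs, Measure.volume_eq_prod, ← Measure.prod_restrict,
    Measure.restrict_congr_set (Ioo_ae_eq_Ico (a := (0 : ℝ)) (b := 1)),
    Measure.restrict_congr_set (Ioo_ae_eq_Ico (a := (-(1 / 2) : ℝ)) (b := 1 / 2)),
    Measure.prod_apply (hm hs), Measure.restrict_apply hs]
  have := ts_sum (1 / (N : ℝ)) (by positivity) s hs N
  rw [mul_one_div_cancel hNpos.ne'] at this
  rw [← this]
  refine lintegral_congr fun x => ?_
  rw [Measure.restrict_apply (measurable_prodMk_left (hm hs))]
  rfl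

/-- **Inner Product Rule.** If `u, v ∈ L²(0,1)`, then `(Tu)(Tv)` is integrable
on `(0,1) × (-1/2, 1/2)` and `∫ u v = ∫∫ (Tu)(Tv)`. -/
theorem two_scale_inner_product_rule (N : ℕ) (hN : 0 < N) (u v : ℝ → ℝ)
    (hu : MemLp u 2 (volume.restrict (Ioo (0 : ℝ) 1)))
    (hv : MemLp v 2 (volume.restrict (Ioo (0 : ℝ) 1))) :
    IntegrableOn (fun p : ℝ × ℝ => twoScale N u p.1 p.2 * twoScale N v p.1 p.2)
        (Ioo (0 : ℝ) 1 ×ˢ Ioo (-(1 / 2) : ℝ) (1 / 2)) ∧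
    ∫ x in Ioo (0 : ℝ) 1, u x * v x
      = ∫ p in Ioo (0 : ℝ) 1 ×ˢ Ioo (-(1 / 2) : ℝ) (1 / 2),
          twoScale N u p.1 p.2 * twoScale N v p.1 p.2 := by
  have hf : Integrable (fun x => u x * v x) (volume.restrict (Ioo (0 : ℝ) 1)) :=
    hu.integrable_mul hv
  have hmp := ts_mp N hN
  refine ⟨hmp.integrable_comp_of_integrable hf, ?_⟩
  have h := hf.aestronglyMeasurable
  rw [← hmp.map_eq] at h
  have h2 := integral_map hmp.measurable.aemeasurable h
  rw [hmp.map_eq] at h2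
  exact h2
end

section
/- Third Block (microscopic boundary condition): under the sequence setting, the two-scale expansion hypothesis, the weak two-scale convergence of the derivatives to η, and assuming in addition that there is a continuously differentiable ū : [0,1] → ℝ with u⁰(x,y) = ū(x) for almost every (x,y), the function ũ¹(x,y) := u¹(x,y) − y ū'(x) is Ω¹-periodic in y and η = ū' + ∂ũ¹/∂y, in the following weak sense: for every infinitely differentiable v : ℝ × ℝ → ℝ that is 1-periodic in its second argument and vanishes whenever its first argument lies outside a compact subset of (0,1), ∫∫_{(0,1)×(−1/2,1/2)} η v dx dy = ∫∫ ū'(x) v(x,y) dx dy − ∫∫ (u¹(x,y) − y ū'(x)) (∂v/∂y)(x,y) dx dy. -/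
open Set MeasureTheory Filter

/-- The two-scale domain `(0,1) × (-1/2, 1/2)`. -/
noncomputable def twoScaleDom : Set (ℝ × ℝ) :=
  Ioo (0 : ℝ) 1 ×ˢ Ioo (-(1 / 2) : ℝ) (1 / 2)

open Topology

lemma ts_arg_mem {N : ℕ} (hN : 1 ≤ N) {x y : ℝ} (hx : x ∈ Ioo (0:ℝ) 1)
    (hy : y ∈ Icc (-(1/2):ℝ) (1/2)) :
    (1 / (N : ℝ)) * ((⌊x / (1 / (N : ℝ))⌋ : ℝ) + 1 / 2) + (1 / (N : ℝ)) * y ∈ Icc (0:ℝ) 1 := by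
  have hN' : (0:ℝ) < N := by exact_mod_cast hN
  have e : x / (1 / (N:ℝ)) = N * x := by field_simp
  rw [e]
  have h0 : (0:ℤ) ≤ ⌊(N:ℝ) * x⌋ := Int.floor_nonneg.2 (by have := hx.1; positivity)
  have h1 : ⌊(N:ℝ) * x⌋ < (N:ℤ) := by
    rw [Int.floor_lt]; push_cast; nlinarith [hx.2]
  have h1' : ⌊(N:ℝ) * x⌋ + 1 ≤ (N:ℤ) := h1
  have h0r : (0:ℝ) ≤ (⌊(N:ℝ) * x⌋ : ℝ) := by exact_mod_cast h0
  have h1r : (⌊(N:ℝ) * x⌋ : ℝ) + 1 ≤ N := by exact_mod_cast h1'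
  have e2 : (1 / (N : ℝ)) * ((⌊(N:ℝ) * x⌋ : ℝ) + 1 / 2) + (1 / (N : ℝ)) * y
      = ((⌊(N:ℝ) * x⌋ : ℝ) + 1 / 2 + y) / N := by field_simp
  rw [e2]
  refine ⟨div_nonneg ?_ hN'.le, (div_le_one hN').2 ?_⟩
  · linarith [hy.1]
  · linarith [hy.2]

lemma ts_bound {N : ℕ} (hN : 1 ≤ N) {u : ℝ → ℝ} {M : ℝ} (hM : ∀ z ∈ Icc (0:ℝ) 1, |u z| ≤ M)
    {x y : ℝ} (hx : x ∈ Ioo (0:ℝ) 1) (hy : y ∈ Icc (-(1/2):ℝ) (1/2)) :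
    |twoScale N u x y| ≤ M := hM _ (ts_arg_mem hN hx hy)

lemma ts_meas (N : ℕ) {u : ℝ → ℝ} (hu : Continuous u) :
    Measurable (fun p : ℝ × ℝ => twoScale N u p.1 p.2) := by
  unfold twoScale
  refine hu.measurable.comp ?_
  have : Measurable (fun p : ℝ × ℝ => ((⌊p.1 / (1 / (N : ℝ))⌋ : ℤ) : ℝ)) :=
    (measurable_from_top (f := fun z : ℤ => (z:ℝ))).comp
      (Int.measurable_floor.comp (measurable_fst.div_const _))
  exact ((this.add_const _).const_mul _).add (measurable_snd.const_mul _)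

lemma dom_meas : MeasurableSet twoScaleDom := measurableSet_Ioo.prod measurableSet_Ioo

lemma dom_vol : volume twoScaleDom = 1 := by
  unfold twoScaleDom
  rw [Measure.volume_eq_prod, Measure.prod_prod, Real.volume_Ioo, Real.volume_Ioo]
  norm_num

instance dom_fin : IsFiniteMeasure ((volume : Measure (ℝ × ℝ)).restrict twoScaleDom) :=
  ⟨by rw [Measure.restrict_apply_univ, dom_vol]; simp⟩

lemma dom_memLp (q : ENNReal) {f : ℝ × ℝ → ℝ} (hf : Measurable f) {M : ℝ}
    (hM : ∀ p ∈ twoScaleDom, |f p| ≤ M) : MemLp f q (volume.restrict twoScaleDom) :=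
  MemLp.of_bound hf.aestronglyMeasurable M
    ((ae_restrict_iff' dom_meas).2 (ae_of_all _ fun p hp => by simpa using hM p hp))

lemma cont_bdd {f : ℝ × ℝ → ℝ} (hf : Continuous f) : ∃ M, ∀ p ∈ twoScaleDom, |f p| ≤ M := by
  obtain ⟨M, hM⟩ := ((isCompact_Icc (a := (0:ℝ)) (b := 1)).prod
    (isCompact_Icc (a := (-(1/2):ℝ)) (b := 1/2))).exists_bound_of_continuousOn hf.continuousOn
  exact ⟨M, fun p hp => by
    simpa using hM p ⟨Ioo_subset_Icc_self hp.1, Ioo_subset_Icc_self hp.2⟩⟩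

lemma cont_memLp (q : ENNReal) {f : ℝ × ℝ → ℝ} (hf : Continuous f) :
    MemLp f q (volume.restrict twoScaleDom) :=
  let ⟨_, hM⟩ := cont_bdd hf
  dom_memLp q hf.measurable hM

lemma ts_memLp (q : ENNReal) {N : ℕ} (hN : 1 ≤ N) {u : ℝ → ℝ} (hu : Continuous u) :
    MemLp (fun p : ℝ × ℝ => twoScale N u p.1 p.2) q (volume.restrict twoScaleDom) := by
  obtain ⟨M, hM⟩ := (isCompact_Icc (a := (0:ℝ)) (b := 1)).exists_bound_of_continuousOn
    hu.continuousOn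
  exact dom_memLp q (ts_meas N hu) (M := M) fun p hp =>
    ts_bound hN (fun z hz => by simpa using hM z hz) hp.1 (Ioo_subset_Icc_self hp.2)

lemma int_mul {f g : ℝ × ℝ → ℝ} (hf : MemLp f 2 (volume.restrict twoScaleDom))
    (hg : MemLp g 2 (volume.restrict twoScaleDom)) :
    IntegrableOn (fun p => f p * g p) twoScaleDom := hf.integrable_mul hg

lemma fubini {f : ℝ × ℝ → ℝ} (hf : IntegrableOn f twoScaleDom) :
    ∫ p in twoScaleDom, f p = ∫ x in Ioo (0:ℝ) 1, ∫ y in (-(1/2):ℝ)..(1/2), f (x, y) := by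
  unfold twoScaleDom at *
  rw [Measure.volume_eq_prod] at *
  rw [setIntegral_prod _ hf]
  congr 1; ext x
  rw [intervalIntegral.integral_of_le (by norm_num), integral_Ioc_eq_integral_Ioo]

lemma parts {N : ℕ} (hN : 1 ≤ N) {u : ℝ → ℝ} (hu : ContDiff ℝ 1 u) {W W' : ℝ × ℝ → ℝ}
    (hW : Continuous W) (hW' : Continuous W')
    (hd : ∀ x y, HasDerivAt (fun y => W (x, y)) (W' (x, y)) y) :
    ∫ p in twoScaleDom, twoScale N (deriv u) p.1 p.2 * W p
      = N * (∫ x in Ioo (0:ℝ) 1, (twoScale N u x (1/2) * W (x, 1/2)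
          - twoScale N u x (-(1/2)) * W (x, -(1/2))))
        - N * ∫ p in twoScaleDom, twoScale N u p.1 p.2 * W' p := by
  have hN' : (0:ℝ) < N := by exact_mod_cast hN
  have hc := hu.continuous
  have hc' : Continuous (deriv u) := hu.continuous_deriv le_rfl
  have i1 := (int_mul (ts_memLp 2 hN hc') (cont_memLp 2 hW)).const_mul (1 / (N:ℝ))
  have i2 := int_mul (ts_memLp 2 hN hc) (cont_memLp 2 hW')
  have key := fubini (i1.add i2)
  have h2 : ∀ x, ∫ y in (-(1/2):ℝ)..(1/2),
      (((fun p : ℝ × ℝ => (1 / (N:ℝ)) * (twoScale N (deriv u) p.1 p.2 * W p))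
        + fun p : ℝ × ℝ => twoScale N u p.1 p.2 * W' p) (x, y))
      = twoScale N u x (1/2) * W (x, 1/2) - twoScale N u x (-(1/2)) * W (x, -(1/2)) := by
    intro x
    have hcW : Continuous fun y => W (x, y) := by fun_prop
    have hcW' : Continuous fun y => W' (x, y) := by fun_prop
    have ht : Continuous fun y => twoScale N u x y := by unfold twoScale; fun_prop
    have ht' : Continuous fun y => twoScale N (deriv u) x y := by unfold twoScale; fun_prop
    rw [intervalIntegral.integral_eq_sub_of_hasDerivAt
      (f := fun y => twoScale N u x y * W (x, y))]
    · intro y _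
      have hl : HasDerivAt (fun y => (1 / (N : ℝ)) * ((⌊x / (1 / (N : ℝ))⌋ : ℝ) + 1 / 2)
          + (1 / (N : ℝ)) * y) (1 / (N:ℝ)) y := by
        simpa using ((hasDerivAt_id y).const_mul (1 / (N:ℝ))).const_add
          ((1 / (N : ℝ)) * ((⌊x / (1 / (N : ℝ))⌋ : ℝ) + 1 / 2))
      have := ((hu.differentiable (by norm_num)).differentiableAt.hasDerivAt (x :=
        (1 / (N : ℝ)) * ((⌊x / (1 / (N : ℝ))⌋ : ℝ) + 1 / 2)
          + (1 / (N : ℝ)) * y)).comp y hl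
      have h3 : HasDerivAt (fun y => twoScale N u x y)
          (twoScale N (deriv u) x y * (1 / (N:ℝ))) y := this
      refine HasDerivAt.congr_deriv (HasDerivAt.fun_mul h3 (hd x y)) (Eq.symm ?_)
      show (1 / (N:ℝ)) * (twoScale N (deriv u) x y * W (x, y)) + twoScale N u x y * W' (x, y)
        = twoScale N (deriv u) x y * (1 / (N:ℝ)) * W (x, y) + twoScale N u x y * W' (x, y)
      ring
    · apply Continuous.intervalIntegrable
      show Continuous (fun y => (1 / (N:ℝ)) * (twoScale N (deriv u) x y * W (x, y))
        + twoScale N u x y * W' (x, y))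
      fun_prop
  simp_rw [h2] at key
  rw [← key]
  have h4 := integral_add i1 i2
  simp only [Pi.add_apply]
  rw [h4, integral_const_mul]
  field_simp
  ring

lemma sup_bound {u : ℝ → ℝ} (hu : ContDiff ℝ 1 u) {C : ℝ}
    (h1 : (∫ x in Ioo (0 : ℝ) 1, (u x) ^ 2) ≤ C ^ 2)
    (h2 : (∫ x in Ioo (0 : ℝ) 1, (deriv u x) ^ 2) ≤ C ^ 2) :
    ∀ z ∈ Icc (0:ℝ) 1, |u z| ≤ 1 + C ^ 2 := by
  have hc := hu.continuous
  have hc' : Continuous (deriv u) := hu.continuous_deriv le_rfl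
  rw [← integral_Ioc_eq_integral_Ioo, ← intervalIntegral.integral_of_le zero_le_one] at h1 h2
  have half : ∀ f : ℝ → ℝ, Continuous f → (∫ x in (0:ℝ)..1, (f x)^2) ≤ C^2 →
      (∫ x in (0:ℝ)..1, |f x|) ≤ (1 + C^2)/2 := by
    intro f hf h
    have : (∫ x in (0:ℝ)..1, |f x|) ≤ ∫ x in (0:ℝ)..1, (1/2 + (1/2) * (f x)^2) := by
      apply intervalIntegral.integral_mono_on zero_le_one
      · exact Continuous.intervalIntegrable (by fun_prop) _ _
      · exact Continuous.intervalIntegrable (by fun_prop) _ _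
      · intro x _
        nlinarith [sq_nonneg (|f x| - 1), sq_abs (f x)]
    rw [intervalIntegral.integral_add (by simp)
      (Continuous.intervalIntegrable (by fun_prop) _ _),
      intervalIntegral.integral_const_mul] at this
    simp at this
    linarith
  have a1 := half u hc h1
  have a2 := half _ hc' h2
  intro z hz
  have key : ∀ y ∈ Icc (0:ℝ) 1, |u z| ≤ |u y| + (1 + C^2)/2 := by
    intro y hy
    have e : ∫ t in y..z, deriv u t = u z - u y :=
      intervalIntegral.integral_deriv_eq_sub (fun x _ => hu.differentiable (by norm_num) x)
        (hc'.intervalIntegrable _ _)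
    have b : |∫ t in y..z, deriv u t| ≤ ∫ t in (0:ℝ)..1, |deriv u t| := by
      refine (intervalIntegral.norm_integral_le_integral_norm_uIoc (f := deriv u)
        (μ := volume) (a := y) (b := z)).trans ?_
      rw [intervalIntegral.integral_of_le zero_le_one]
      apply setIntegral_mono_set
      · exact (hc'.abs.integrableOn_Icc).mono_set Ioc_subset_Icc_self
      · exact ae_of_all _ fun x => abs_nonneg _
      · refine (Ioc_subset_Ioc ?_ ?_).eventuallyLE
        · exact le_min hy.1 hz.1
        · exact max_le hy.2 hz.2
    rw [e] at b
    have := abs_sub_abs_le_abs_sub (u z) (u y)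
    linarith
  have : (∫ y in (0:ℝ)..1, |u z|) ≤ ∫ y in (0:ℝ)..1, (|u y| + (1 + C^2)/2) := by
    apply intervalIntegral.integral_mono_on zero_le_one
    · simp
    · exact Continuous.intervalIntegrable (by fun_prop) _ _
    · exact key
  rw [intervalIntegral.integral_add (Continuous.intervalIntegrable (by fun_prop) _ _)
    (by simp)] at this
  simp at this
  linarith

lemma ts_shift {N : ℕ} (hN : 1 ≤ N) (u : ℝ → ℝ) (x : ℝ) :
    twoScale N u x (1/2) = twoScale N u (x + 1 / (N:ℝ)) (-(1/2)) := by
  have hN' : (0:ℝ) < N := by exact_mod_cast hN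
  unfold twoScale
  have : (x + 1 / (N:ℝ)) / (1 / (N:ℝ)) = x / (1 / (N:ℝ)) + 1 := by field_simp
  rw [this, Int.floor_add_one]
  push_cast
  congr 1; ring

lemma ts_meas1 (N : ℕ) {u : ℝ → ℝ} (hu : Continuous u) (c : ℝ) :
    Measurable (fun x : ℝ => twoScale N u x c) := by
  have h1 : Measurable (fun x : ℝ => (x, c)) := by fun_prop
  have h2 := Measurable.comp (ts_meas N hu) h1
  exact h2

lemma ts_int1 {N : ℕ} (hN : 1 ≤ N) {u : ℝ → ℝ} (hu : Continuous u) {c : ℝ}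
    (hc : c ∈ Icc (-(1/2):ℝ) (1/2)) {f : ℝ → ℝ} (hf : Continuous f) :
    IntegrableOn (fun x => twoScale N u x c * f x) (Ioo (0:ℝ) 1) := by
  obtain ⟨M, hM⟩ := (isCompact_Icc (a := (0:ℝ)) (b := 1)).exists_bound_of_continuousOn
    hu.continuousOn
  have h1 : IntegrableOn f (Ioo (0:ℝ) 1) :=
    (hf.integrableOn_Icc (μ := volume)).mono_set Ioo_subset_Icc_self
  refine Integrable.bdd_mul (c := M) h1 (ts_meas1 N hu c).aestronglyMeasurable ?_
  refine (ae_restrict_iff' measurableSet_Ioo).2 (ae_of_all _ fun x hx => ?_)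
  exact hM _ (ts_arg_mem hN hx hc)

lemma shift_int {N : ℕ} (hN : 1 ≤ N) {u : ℝ → ℝ} (hu : Continuous u) {f : ℝ → ℝ}
    (hf : Continuous f) {b : ℝ} (hb : b < 1) (hs : ∀ x ∉ Ioo 0 b, f x = 0)
    (hNb : 1 / (N:ℝ) ≤ 1 - b) :
    ∫ x in Ioo (0:ℝ) 1, (twoScale N u x (1/2) * f x - twoScale N u x (-(1/2)) * f x)
      = ∫ x in Ioo (0:ℝ) 1, twoScale N u x (-(1/2)) * (f (x - 1 / (N:ℝ)) - f x) := by
  have hN' : (0:ℝ) < 1 / (N:ℝ) := by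
    have : (0:ℝ) < N := by exact_mod_cast hN
    positivity
  have e1 : ∫ x in Ioo (0:ℝ) 1, twoScale N u x (1/2) * f x
      = ∫ x in Ioo (0:ℝ) 1, twoScale N u x (-(1/2)) * f (x - 1 / (N:ℝ)) := by
    rw [setIntegral_eq_integral_of_forall_compl_eq_zero,
      setIntegral_eq_integral_of_forall_compl_eq_zero]
    · rw [← integral_add_right_eq_self
        (fun x => twoScale N u x (-(1/2)) * f (x - 1 / (N:ℝ))) (1 / (N:ℝ))]
      simp_rw [ts_shift hN, add_sub_cancel_right]
    · intro x hx
      rw [hs _ (fun h => hx ⟨by linarith [h.1], by linarith [h.2]⟩), mul_zero]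
    · intro x hx
      rw [hs _ (fun h => hx ⟨h.1, by linarith [h.2]⟩), mul_zero]
  have m1 : (1/2 : ℝ) ∈ Icc (-(1/2):ℝ) (1/2) := by norm_num
  have m2 : (-(1/2) : ℝ) ∈ Icc (-(1/2):ℝ) (1/2) := by norm_num
  simp_rw [mul_sub]
  rw [integral_sub (ts_int1 hN hu m1 hf) (ts_int1 hN hu m2 hf),
    integral_sub (ts_int1 hN hu m2 (f := fun x => f (x - 1 / (N:ℝ))) (by fun_prop))
      (ts_int1 hN hu m2 hf), e1]

lemma bdry_limit {u : ℕ → ℝ → ℝ} (hu : ∀ N, Continuous (u N)) {M : ℝ}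
    (hM : ∀ N, ∀ z ∈ Icc (0:ℝ) 1, |u N z| ≤ M) {f : ℝ → ℝ} (hf : ContDiff ℝ 1 f)
    {b : ℝ} (hb : b < 1) (hs : ∀ x ∉ Ioo 0 b, f x = 0) {L : ℝ}
    (hL : Tendsto (fun N : ℕ => ∫ x in Ioo (0:ℝ) 1, twoScale N (u N) x (-(1/2)) * deriv f x)
      atTop (𝓝 L)) :
    Tendsto (fun N : ℕ => (N:ℝ) * ∫ x in Ioo (0:ℝ) 1,
      (twoScale N (u N) x (1/2) * f x - twoScale N (u N) x (-(1/2)) * f x)) atTop (𝓝 (-L)) := by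
  have hc := hf.continuous
  have hc' : Continuous (deriv f) := hf.continuous_deriv le_rfl
  have m2 : (-(1/2) : ℝ) ∈ Icc (-(1/2):ℝ) (1/2) := by norm_num
  obtain ⟨A, hA⟩ := (isCompact_Icc (a := (-1:ℝ)) (b := 1)).exists_bound_of_continuousOn
    hc'.continuousOn
  have hM0 : 0 ≤ M := (abs_nonneg _).trans (hM 0 0 (by simp))
  have lim0 : Tendsto (fun N : ℕ => ∫ x in Ioo (0:ℝ) 1, twoScale N (u N) x (-(1/2)) *
      ((N:ℝ) * (f (x - 1 / (N:ℝ)) - f x) + deriv f x)) atTop (𝓝 (∫ x in Ioo (0:ℝ) 1, (0:ℝ))) := by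
    apply tendsto_integral_filter_of_dominated_convergence (fun _ => M * (A + A))
    · refine Eventually.of_forall fun N => ?_
      refine ((ts_meas1 N (hu N) _).mul (Continuous.measurable ?_)).aestronglyMeasurable
      fun_prop
    · filter_upwards [eventually_ge_atTop 1] with N hN
      refine (ae_restrict_iff' measurableSet_Ioo).2 (ae_of_all _ fun x hx => ?_)
      have hN' : (1:ℝ) ≤ N := by exact_mod_cast hN
      have hN1 : 1 / (N:ℝ) ≤ 1 := by rw [div_le_one (by linarith)]; exact hN'
      have hN0 : 0 < 1 / (N:ℝ) := by positivity
      have hmv := (convex_Icc (-1:ℝ) 1).norm_image_sub_le_of_norm_deriv_le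
        (f := f) (C := A) (fun x _ => hf.differentiable (by norm_num) x) hA
        (x := x) (y := x - 1 / (N:ℝ)) ⟨by linarith [hx.1], hx.2.le⟩
        ⟨by linarith [hx.1], by linarith [hx.2]⟩
      have e : ‖x - 1 / (N:ℝ) - x‖ = 1 / (N:ℝ) := by
        rw [Real.norm_eq_abs, sub_sub_cancel_left, abs_neg, abs_of_pos hN0]
      rw [e] at hmv
      rw [norm_mul]
      have h1 : ‖twoScale N (u N) x (-(1/2))‖ ≤ M := ts_bound hN (hM N) hx m2
      refine mul_le_mul h1 ?_ (norm_nonneg _) hM0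
      refine (norm_add_le _ _).trans (add_le_add ?_ (hA x ⟨by linarith [hx.1], hx.2.le⟩))
      rw [norm_mul, Real.norm_of_nonneg (by linarith : (0:ℝ) ≤ N)]
      calc (N:ℝ) * ‖f (x - 1 / (N:ℝ)) - f x‖ ≤ N * (A * (1 / (N:ℝ))) := by gcongr
        _ = A := by field_simp
    · exact integrable_const _
    · refine (ae_restrict_iff' measurableSet_Ioo).2 (ae_of_all _ fun x hx => ?_)
      have hd := ((hf.differentiable (by norm_num)) x).hasDerivAt.tendsto_slope_zero
      have ht : Tendsto (fun N : ℕ => -(1 / (N:ℝ))) atTop (𝓝[≠] 0) := by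
        rw [tendsto_nhdsWithin_iff]
        refine ⟨by simpa using (tendsto_one_div_atTop_nhds_zero_nat (𝕜 := ℝ)).neg, ?_⟩
        filter_upwards [eventually_ge_atTop 1] with N hN
        have hN' : (1:ℝ) ≤ N := by exact_mod_cast hN
        have : 0 < 1 / (N:ℝ) := by positivity
        simp only [mem_compl_iff, mem_singleton_iff]; linarith
      have h2 := hd.comp ht
      have h3 : Tendsto (fun N : ℕ => (N:ℝ) * (f (x - 1 / (N:ℝ)) - f x) + deriv f x)
          atTop (𝓝 0) := by
        have := h2.neg.add_const (deriv f x)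
        rw [neg_add_cancel] at this
        refine this.congr fun N => ?_
        simp only [Function.comp, sub_eq_add_neg, smul_eq_mul, one_div, inv_neg, inv_inv]
        ring
      refine squeeze_zero_norm' (a := fun N : ℕ => M * ‖(N:ℝ) * (f (x - 1 / (N:ℝ)) - f x)
        + deriv f x‖) ?_ (by simpa using h3.norm.const_mul M)
      filter_upwards [eventually_ge_atTop 1] with N hN
      rw [norm_mul]
      have h1 : ‖twoScale N (u N) x (-(1/2))‖ ≤ M := ts_bound hN (hM N) hx m2
      gcongr
  have h := lim0.sub hL
  simp only [integral_zero, zero_sub] at h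
  refine h.congr' ?_
  have hev : ∀ᶠ N : ℕ in atTop, 1 / (N:ℝ) ≤ 1 - b :=
    (tendsto_one_div_atTop_nhds_zero_nat (𝕜 := ℝ)).eventually_le_const (by linarith)
  filter_upwards [eventually_ge_atTop 1, hev] with N hN hNb
  rw [shift_int hN (hu N) hc hb hs hNb, ← integral_sub, ← integral_const_mul]
  · congr 1; ext x; ring
  · exact ts_int1 hN (hu N) m2 (f := fun x => (N:ℝ) * (f (x - 1 / (N:ℝ)) - f x) + deriv f x)
      (by fun_prop)
  · exact ts_int1 hN (hu N) m2 hc'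

/-- **Third Block: microscopic boundary condition.** Under the sequence
setting, if moreover `u⁰(x,y) = ū(x)` a.e. with `ū` continuously
differentiable, then `ũ¹(x,y) = u¹(x,y) − y ū'(x)` is `Ω¹`-periodic in `y` and
`η = ū' + ∂ũ¹/∂y`, in the weak sense tested against smooth functions that are
1-periodic in the second variable and compactly supported in `(0,1)` in the
first variable. -/
theorem third_block_microscopic_boundary_condition
    (u : ℕ → ℝ → ℝ) (hu : ∀ N, ContDiff ℝ 1 (u N))
    (C : ℝ) (hC : 0 < C)
    (hbound : ∀ N : ℕ, (∫ x in Ioo (0 : ℝ) 1, (u N x) ^ 2) ≤ C ^ 2 ∧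
      (∫ x in Ioo (0 : ℝ) 1, (deriv (u N) x) ^ 2) ≤ C ^ 2)
    (u0 u1 : ℝ × ℝ → ℝ)
    (hu0 : MemLp u0 2 (volume.restrict twoScaleDom))
    (hu1 : MemLp u1 2 (volume.restrict twoScaleDom))
    (hexp : ∀ v : ℝ × ℝ → ℝ, MemLp v 2 (volume.restrict twoScaleDom) →
      Tendsto (fun N : ℕ => (N : ℝ) *
          ∫ p in twoScaleDom,
            (twoScale N (u N) p.1 p.2 - u0 p - (1 / (N : ℝ)) * u1 p) * v p)
        atTop (nhds 0))
    (η : ℝ × ℝ → ℝ) (hη : MemLp η 2 (volume.restrict twoScaleDom))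
    (hweak : ∀ v : ℝ × ℝ → ℝ, MemLp v 2 (volume.restrict twoScaleDom) →
      Tendsto (fun N : ℕ =>
          ∫ p in twoScaleDom, twoScale N (deriv (u N)) p.1 p.2 * v p)
        atTop (nhds (∫ p in twoScaleDom, η p * v p)))
    (ub : ℝ → ℝ) (hub : ContDiff ℝ 1 ub)
    (hu0eq : ∀ᵐ p ∂(volume.restrict twoScaleDom), u0 p = ub p.1) :
    ∀ v : ℝ → ℝ → ℝ, ContDiff ℝ (⊤ : ℕ∞) (fun p : ℝ × ℝ => v p.1 p.2) →
      (∀ x y : ℝ, v x (y + 1) = v x y) →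
      (∃ K : Set ℝ, IsCompact K ∧ K ⊆ Ioo (0 : ℝ) 1 ∧
        ∀ x ∉ K, ∀ y : ℝ, v x y = 0) →
      ∫ p in twoScaleDom, η p * v p.1 p.2
        = (∫ p in twoScaleDom, deriv ub p.1 * v p.1 p.2)
          - ∫ p in twoScaleDom,
              (u1 p - p.2 * deriv ub p.1) * deriv (fun y => v p.1 y) p.2 := by
  intro v hv hper ⟨K, hK, hKs, hv0⟩
  have hcu : ∀ N, Continuous (u N) := fun N => (hu N).continuous
  have hM : ∀ N, ∀ z ∈ Icc (0:ℝ) 1, |u N z| ≤ 1 + C ^ 2 := fun N =>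
    sup_bound (hu N) (hbound N).1 (hbound N).2
  have hub' : Continuous (deriv ub) := hub.continuous_deriv le_rfl
  obtain ⟨Vy, hVy⟩ : ∃ Vy : ℝ × ℝ → ℝ,
      Vy = fun p => fderiv ℝ (fun p : ℝ × ℝ => v p.1 p.2) p (0, 1) := ⟨_, rfl⟩
  have hVc : Continuous (fun p : ℝ × ℝ => v p.1 p.2) := hv.continuous
  have hVyc : Continuous Vy := by
    rw [hVy]
    exact (hv.continuous_fderiv (by simp)).clm_apply continuous_const
  have hd : ∀ x y, HasDerivAt (fun y => v x y) (Vy (x, y)) y := by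
    intro x y
    rw [hVy]
    have h1 := (hv.differentiable (by simp) (x, y)).hasFDerivAt
    have h2 : HasDerivAt (fun y : ℝ => (x, y)) ((0:ℝ), (1:ℝ)) y :=
      (hasDerivAt_const y x).prodMk (hasDerivAt_id y)
    exact h1.comp_hasDerivAt y h2
  have hdv : ∀ p : ℝ × ℝ, deriv (fun y => v p.1 y) p.2 = Vy p := fun p => (hd p.1 p.2).deriv
  simp_rw [hdv]
  have hper' : ∀ x, v x (1/2) = v x (-(1/2)) := by
    intro x
    rw [← hper x (-(1/2))]; norm_num
  obtain ⟨b, hb0, hb1, hKb⟩ : ∃ b : ℝ, 0 < b ∧ b < 1 ∧ K ⊆ Ioo 0 b := by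
    rcases K.eq_empty_or_nonempty with h | h
    · exact ⟨1/2, by norm_num, by norm_num, by simp [h]⟩
    · obtain ⟨m, hm, hm'⟩ := hK.exists_isGreatest h
      have := hKs hm
      exact ⟨(m + 1)/2, by linarith [this.1], by linarith [this.2], fun x hx =>
        ⟨(hKs hx).1, by linarith [hm' hx, this.2]⟩⟩
  obtain ⟨f, hfdef⟩ : ∃ f : ℝ → ℝ, f = fun x => v x (1/2) := ⟨_, rfl⟩
  have hf : ContDiff ℝ 1 f := by
    rw [hfdef]
    have h1 : ContDiff ℝ (⊤ : ℕ∞) (fun x : ℝ => (x, (1/2:ℝ))) := by fun_prop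
    exact (hv.comp h1).of_le (by exact_mod_cast le_top)
  have hf' : Continuous (deriv f) := hf.continuous_deriv le_rfl
  have hfc := hf.continuous
  have hfs : ∀ x ∉ Ioo 0 b, f x = 0 := by
    intro x hx
    rw [hfdef]
    exact hv0 x (fun h => hx (hKb h)) _
  have hε := tendsto_one_div_atTop_nhds_zero_nat (𝕜 := ℝ)
  have hubM : MemLp (fun p : ℝ × ℝ => ub p.1) 2 (volume.restrict twoScaleDom) :=
    cont_memLp 2 (hub.continuous.comp continuous_fst)
  -- expansion of the scaled integral
  have split : ∀ w : ℝ × ℝ → ℝ, Continuous w → ∀ N : ℕ, 1 ≤ N →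
      ∫ p in twoScaleDom, (twoScale N (u N) p.1 p.2 - u0 p - (1 / (N : ℝ)) * u1 p) * w p
      = (∫ p in twoScaleDom, twoScale N (u N) p.1 p.2 * w p)
        - (∫ p in twoScaleDom, ub p.1 * w p)
        - (1 / (N:ℝ)) * ∫ p in twoScaleDom, u1 p * w p := by
    intro w hw N hN
    have i1 := int_mul (ts_memLp 2 hN (hcu N)) (cont_memLp 2 hw)
    have i2 := int_mul hubM (cont_memLp 2 hw)
    have i3 := (int_mul hu1 (cont_memLp 2 hw)).const_mul (1 / (N:ℝ))
    have i12 : IntegrableOn (fun p => twoScale N (u N) p.1 p.2 * w p - ub p.1 * w p)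
      twoScaleDom := i1.sub i2
    rw [← integral_const_mul, ← integral_sub i1 i2, ← integral_sub i12 i3]
    apply integral_congr_ae
    filter_upwards [hu0eq] with p hp
    rw [hp]; ring
  -- weak limit of the transform
  have limT : ∀ w : ℝ × ℝ → ℝ, Continuous w →
      Tendsto (fun N : ℕ => ∫ p in twoScaleDom, twoScale N (u N) p.1 p.2 * w p) atTop
        (𝓝 (∫ p in twoScaleDom, ub p.1 * w p)) := by
    intro w hw
    have h := (hε.mul (hexp w (cont_memLp 2 hw))).add
      ((hε.mul_const (∫ p in twoScaleDom, u1 p * w p)).add_const (∫ p in twoScaleDom, ub p.1 * w p))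
    simp only [zero_mul, zero_add] at h
    refine h.congr' ?_
    filter_upwards [eventually_ge_atTop 1] with N hN
    have hN' : (N:ℝ) ≠ 0 := by positivity
    rw [split w hw N hN]
    field_simp
    ring
  -- trace
  have trace : Tendsto (fun N : ℕ => ∫ x in Ioo (0:ℝ) 1,
      twoScale N (u N) x (-(1/2)) * deriv f x) atTop
      (𝓝 (∫ p in twoScaleDom, ub p.1 * deriv f p.1)) := by
    have hW : Continuous (fun p : ℝ × ℝ => (1/2 - p.2) * deriv f p.1) := by fun_prop
    have hw : Continuous (fun p : ℝ × ℝ => deriv f p.1) := by fun_prop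
    have h := (limT _ hw).sub (hε.mul (hweak _ (cont_memLp 2 hW)))
    rw [zero_mul, sub_zero] at h
    refine h.congr' ?_
    filter_upwards [eventually_ge_atTop 1] with N hN
    have hN' : (N:ℝ) ≠ 0 := by positivity
    rw [parts hN (hu N) hW (W' := fun p => - deriv f p.1) (by fun_prop) (by
      intro x y
      exact (((hasDerivAt_id y).const_sub (1/2)).mul_const (deriv f x)).congr_deriv (by ring))]
    have e1 : ∫ x in Ioo (0:ℝ) 1, (twoScale N (u N) x (1/2) * ((1/2 - 1/2) * deriv f x)
          - twoScale N (u N) x (-(1/2)) * ((1/2 - -(1/2)) * deriv f x))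
        = - ∫ x in Ioo (0:ℝ) 1, twoScale N (u N) x (-(1/2)) * deriv f x := by
      rw [← integral_neg]
      congr 1; ext x; ring
    have e2 : ∫ p in twoScaleDom, twoScale N (u N) p.1 p.2 * (- deriv f p.1)
        = - ∫ p in twoScaleDom, twoScale N (u N) p.1 p.2 * deriv f p.1 := by
      rw [← integral_neg]
      congr 1; ext x; ring
    simp only [e1, e2]
    field_simp
    ring
  have bl := bdry_limit hcu hM hf hb1 hfs trace
  have l2 : Tendsto (fun N : ℕ => (N:ℝ) * ∫ p in twoScaleDom, twoScale N (u N) p.1 p.2 * Vy p)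
      atTop (𝓝 (∫ p in twoScaleDom, u1 p * Vy p)) := by
    have z : ∫ p in twoScaleDom, ub p.1 * Vy p = 0 := by
      rw [fubini (int_mul hubM (cont_memLp 2 hVyc))]
      have : ∀ x, ∫ y in (-(1/2):ℝ)..(1/2), ub x * Vy (x, y) = 0 := by
        intro x
        rw [intervalIntegral.integral_const_mul,
          intervalIntegral.integral_eq_sub_of_hasDerivAt (fun y _ => hd x y)
            (Continuous.intervalIntegrable (by fun_prop) _ _), hper' x, sub_self, mul_zero]
      simp only [this, integral_zero]
    have h := (hexp Vy (cont_memLp 2 hVyc)).add_const (∫ p in twoScaleDom, u1 p * Vy p)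
    rw [zero_add] at h
    refine h.congr' ?_
    filter_upwards [eventually_ge_atTop 1] with N hN
    have hN' : (N:ℝ) ≠ 0 := by positivity
    rw [split _ hVyc N hN, z]
    field_simp
    ring
  have lim := bl.sub l2
  have lim' := hweak (fun p => v p.1 p.2) (cont_memLp 2 hVc)
  have e0 : (∫ p in twoScaleDom, η p * v p.1 p.2)
      = -(∫ p in twoScaleDom, ub p.1 * deriv f p.1) - ∫ p in twoScaleDom, u1 p * Vy p := by
    refine tendsto_nhds_unique lim' (lim.congr' ?_)
    filter_upwards [eventually_ge_atTop 1] with N hN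
    rw [parts hN (hu N) hVc hVyc hd]
    simp only [hfdef, ← hper']
  have hfub : ∫ p in twoScaleDom, ub p.1 * deriv f p.1
      = - ∫ x in Ioo (0:ℝ) 1, deriv ub x * f x := by
    rw [fubini (int_mul hubM (cont_memLp 2 (f := fun p : ℝ × ℝ => deriv f p.1) (by fun_prop)))]
    have : ∀ x, ∫ y in (-(1/2):ℝ)..(1/2), ub x * deriv f x = ub x * deriv f x := by
      intro x
      rw [intervalIntegral.integral_const]; norm_num
    simp only [this]
    rw [← integral_Ioc_eq_integral_Ioo, ← integral_Ioc_eq_integral_Ioo,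
      ← intervalIntegral.integral_of_le zero_le_one, ← intervalIntegral.integral_of_le zero_le_one,
      intervalIntegral.integral_mul_deriv_eq_deriv_mul
        (fun x _ => (hub.differentiable (by norm_num) x).hasDerivAt)
        (fun x _ => (hf.differentiable (by norm_num) x).hasDerivAt)
        (hub'.intervalIntegrable _ _) (hf'.intervalIntegrable _ _),
      hfs 0 (by simp), hfs 1 (fun h => by linarith [h.2])]
    ring
  have cub : Continuous (fun p : ℝ × ℝ => deriv ub p.1) := by fun_prop
  have cyub : Continuous (fun p : ℝ × ℝ => p.2 * deriv ub p.1) := by fun_prop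
  have i1 := int_mul (cont_memLp 2 cub) (cont_memLp 2 hVc)
  have i2 := int_mul (cont_memLp 2 cyub) (cont_memLp 2 hVyc)
  have i3 := int_mul hu1 (cont_memLp 2 hVyc)
  have e3 : ∫ p in twoScaleDom, (u1 p - p.2 * deriv ub p.1) * Vy p
      = (∫ p in twoScaleDom, u1 p * Vy p) - ∫ p in twoScaleDom, p.2 * deriv ub p.1 * Vy p := by
    rw [← integral_sub i3 i2]
    congr 1; ext p; ring
  have e4 : (∫ p in twoScaleDom, deriv ub p.1 * v p.1 p.2)
      + ∫ p in twoScaleDom, p.2 * deriv ub p.1 * Vy p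
      = ∫ x in Ioo (0:ℝ) 1, deriv ub x * f x := by
    have i12 : IntegrableOn (fun p : ℝ × ℝ => deriv ub p.1 * v p.1 p.2
      + p.2 * deriv ub p.1 * Vy p) twoScaleDom := i1.add i2
    rw [← integral_add i1 i2, fubini i12]
    congr 1; ext x
    have hvx : Continuous fun y => v x y :=
      hVc.comp (by fun_prop : Continuous fun y : ℝ => (x, y))
    rw [intervalIntegral.integral_eq_sub_of_hasDerivAt
      (f := fun y => deriv ub x * (y * v x y))]
    · rw [← hper' x, hfdef]; ring
    · intro y _
      refine ((HasDerivAt.fun_mul (hasDerivAt_id' y) (hd x y)).const_mul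
        (deriv ub x)).congr_deriv ?_
      ring
    · apply Continuous.intervalIntegrable
      fun_prop
  rw [e0, hfub, e3, ← e4]
  ring
end
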